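/- For every integer N ≥ 2 and every integer k with 0 ≤ k < N, one has S(k) · S(N-1-k) = N. -/

import Mathlib

open Real Finset

/-- `S N k = ∏_{j=1}^{k} (2 sin(ω j / 2))` with `ω = 2π/N`, so `ω j / 2 = π j / N`. -/
noncomputable def S (N k : ℕ) : ℝ := ∏ j ∈ Finset.Icc 1 k, (2 * Real.sin (π * j / N))

/-!
The number `2 sin(πj/N)` is the distance from `1` to the `j`-th power of `ζ = exp(2πi/N)`, so
evaluating `∏_{0<j<N} (X - ζ^j) = 1 + X + ⋯ + X^(N-1)` at `X = 1` gives `∏_{0<j<N} 2 sin(πj/N) = N`.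
By the symmetry `j ↦ N - j` of the sine, `S N (N - 1 - k)` is the part `k < j < N` of this product,
and `S N k` is the part `0 < j ≤ k`.
-/

lemma norm_one_sub_exp_two_pi_I_div_pow (N j : ℕ) :
    ‖1 - Complex.exp (2 * π * Complex.I / N) ^ j‖ = |2 * sin (π * j / N)| := by
  have exp_pow : Complex.exp (2 * π * Complex.I / N) ^ j =
      Complex.exp (Complex.I * (2 * (π * j / N) : ℝ)) := by
    rw [← Complex.exp_nat_mul]
    push_cast
    ring_nf
  rw [exp_pow, norm_sub_rev, Complex.norm_exp_I_mul_ofReal_sub_one,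
    mul_div_cancel_left₀ _ two_ne_zero, norm_eq_abs]

lemma sin_pi_mul_div_nonneg {N j : ℕ} (hj : j ≤ N) : 0 ≤ sin (π * j / N) := by
  refine sin_nonneg_of_nonneg_of_le_pi (by positivity) ?_
  rw [mul_div_assoc]
  exact mul_le_of_le_one_right pi_nonneg (div_le_one_of_le₀ (mod_cast hj) N.cast_nonneg)

lemma sin_pi_mul_sub_div {N j : ℕ} (hj : j ≤ N) :
    sin (π * (N - j : ℕ) / N) = sin (π * j / N) := by
  obtain rfl | hN := eq_or_ne N 0
  · simp
  · rw [← sin_pi_sub (π * j / N), Nat.cast_sub hj]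
    congr 1
    field_simp

lemma prod_Ico_two_mul_sin_pi_mul_div {N : ℕ} (hN : N ≠ 0) :
    ∏ j ∈ Ico 1 N, 2 * sin (π * j / N) = N := by
  have prod_one_sub_pow :
      ∏ j ∈ Ico 1 N, (1 - Complex.exp (2 * π * Complex.I / N) ^ j) = N := by
    obtain ⟨n, rfl⟩ := Nat.exists_eq_add_one_of_ne_zero hN
    simpa [prod_Ico_eq_prod_range, add_comm 1] using
      (Complex.isPrimitiveRoot_exp (n + 1) hN).prod_one_sub_pow_eq_order
  calc ∏ j ∈ Ico 1 N, 2 * sin (π * j / N)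
      = ∏ j ∈ Ico 1 N, ‖1 - Complex.exp (2 * π * Complex.I / N) ^ j‖ :=
        prod_congr rfl fun j hj => by
          rw [norm_one_sub_exp_two_pi_I_div_pow, abs_of_nonneg]
          exact mul_nonneg zero_le_two (sin_pi_mul_div_nonneg (mem_Ico.mp hj).2.le)
    _ = N := by rw [← norm_prod, prod_one_sub_pow, Complex.norm_natCast]

lemma S_eq_prod_Ico (N k : ℕ) : S N k = ∏ j ∈ Ico 1 (k + 1), 2 * sin (π * j / N) := by
  rw [S, Ico_add_one_right_eq_Icc]

lemma S_sub_one_sub_eq_prod_Ico {N k : ℕ} (hk : k < N) :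
    S N (N - 1 - k) = ∏ j ∈ Ico (k + 1) N, 2 * sin (π * j / N) := by
  calc S N (N - 1 - k)
      = ∏ j ∈ Ico (N + 1 - N) (N + 1 - (k + 1)), 2 * sin (π * j / N) := by
        rw [S_eq_prod_Ico]
        congr 2 <;> omega
    _ = ∏ j ∈ Ico (k + 1) N, 2 * sin (π * (N - j : ℕ) / N) :=
        (prod_Ico_reflect (fun j : ℕ => 2 * sin (π * j / N)) _ N.le_succ).symm
    _ = ∏ j ∈ Ico (k + 1) N, 2 * sin (π * j / N) :=
        prod_congr rfl fun j hj => by rw [sin_pi_mul_sub_div (mem_Ico.mp hj).2.le]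

theorem stmt_1 (N : ℕ) (hN : 2 ≤ N) (k : ℕ) (hk : k < N) :
    S N k * S N (N - 1 - k) = N := by
  rw [S_eq_prod_Ico, S_sub_one_sub_eq_prod_Ico hk, prod_Ico_consecutive _ (by omega) hk,
    prod_Ico_two_mul_sin_pi_mul_div (by omega)]
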